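/- arXiv:2412.01574 — 4 statements merged into one kernel-verified Lean document; each statement's English description precedes it below -/
import Mathlib

section
/- Let μ be a compactly supported Borel probability measure on ℝ and let (H_n)_{n≥0}, (γ_n)_{n≥1} be defined from μ as in the context. Fix t ≥ 1, let Φ ∈ ℝ^{t×t} be strictly lower triangular, and set C := Σ_{i=1}^{t} γ_i·Φ^{i−1} (with Φ^0 := I_t). Then: (a) for every λ ∈ ℝ, the matrix I_t − λ·Φ is invertible and (I_t − λ·Φ)^{−1}·(λ·I_t − C) = Σ_{i=1}^{t} H_i(λ)·Φ^{i−1}; (b) ∫ H_n(λ) dμ(λ) = 0 for every n ≥ 1, so that ∫ (I_t − λ·Φ)^{−1}·(λ·I_t − C) dμ(λ) = 0 entrywise. -/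
open MeasureTheory

/-!
Multiplying the truncated generating function `∑_{i < m} H_{i+1}(x) Φ^i` by `1 - x Φ` telescopes,
because `H_{i+1}(x) - x H_i(x) = -γ_{i+1}`; what remains is `x - ∑_{i < m} γ_{i+1} Φ^i` and a
multiple of `Φ^m`. The characteristic polynomial of `Φ` is `X^t`, so this multiple vanishes for
`m = t` by Cayley–Hamilton. The constant `γ_n` is the mean of `x H_{n-1}(x)`, so `H_n` has mean
zero, and the matrix integral is a linear combination of such means.
-/

section Algebra

variable {R A ι : Type*} [CommRing R]

theorem one_sub_smul_mul_sum_smul_pow [Ring A] [Algebra R A] {h γ : ℕ → R} {x : R}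
    (hrec : ∀ n, h (n + 1) = x * h n - γ (n + 1)) (a : A) (m : ℕ) :
    (1 - x • a) * ∑ i ∈ Finset.range m, h (i + 1) • a ^ i =
      (x * h 0) • 1 - ∑ i ∈ Finset.range m, γ (i + 1) • a ^ i - (x * h m) • a ^ m := by
  induction m with
  | zero => simp
  | succ m ih =>
    have last_term : (1 - x • a) * (h (m + 1) • a ^ m) =
        (x * h m) • a ^ m - γ (m + 1) • a ^ m - (x * h (m + 1)) • a ^ (m + 1) := by
      rw [← sub_smul, ← hrec, sub_mul, one_mul, smul_mul_smul_comm, ← pow_succ']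
    rw [Finset.sum_range_succ, Finset.sum_range_succ, mul_add, ih, last_term]
    abel

theorem isUnit_one_sub_smul_of_pow_eq_zero [Ring A] [Algebra R A] {a : A} {t : ℕ}
    (ha : a ^ t = 0) (x : R) : IsUnit (1 - x • a) :=
  IsNilpotent.isUnit_one_sub ⟨t, by rw [smul_pow, ha, smul_zero]⟩

variable [Fintype ι] [DecidableEq ι]

theorem matrix_pow_card_eq_zero_of_strictlyLowerTriangular [LinearOrder ι] {M : Matrix ι ι R}
    (hM : ∀ i j, i ≤ j → M i j = 0) : M ^ Fintype.card ι = 0 := by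
  have upper : M.transpose.IsUpperTriangular := fun i j hji => hM j i hji.le
  have charpoly_eq : M.charpoly = Polynomial.X ^ Fintype.card ι := by
    simp [← M.charpoly_transpose, Matrix.charpoly_of_isUpperTriangular _ upper, hM]
  simpa [charpoly_eq] using M.aeval_self_charpoly

theorem inv_one_sub_smul_mul_eq_sum_smul_pow {h γ : ℕ → R} {x : R} (h_zero : h 0 = 1)
    (hrec : ∀ n, h (n + 1) = x * h n - γ (n + 1)) {M : Matrix ι ι R} {t : ℕ} (hM : M ^ t = 0) :
    (1 - x • M)⁻¹ * (x • (1 : Matrix ι ι R) - ∑ i ∈ Finset.range t, γ (i + 1) • M ^ i) =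
      ∑ i ∈ Finset.range t, h (i + 1) • M ^ i := by
  have telescoped := one_sub_smul_mul_sum_smul_pow hrec M t
  rw [h_zero, mul_one, hM, smul_zero, sub_zero] at telescoped
  have isUnit_det := (Matrix.isUnit_iff_isUnit_det _).mp (isUnit_one_sub_smul_of_pow_eq_zero hM x)
  rw [← telescoped, Matrix.nonsing_inv_mul_cancel_left _ _ isUnit_det]

end Algebra

section Integration

theorem integrable_of_continuous_of_measure_compl_compact_eq_zero {X E : Type*}
    [TopologicalSpace X] [T2Space X] [MeasurableSpace X] [OpensMeasurableSpace X]
    [NormedAddCommGroup E] {μ : Measure X} [IsFiniteMeasureOnCompacts μ] {K : Set X}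
    (hK : IsCompact K) (hKc : μ Kᶜ = 0) {f : X → E} (hf : Continuous f) : Integrable f μ := by
  have integrableOn_K : IntegrableOn f K μ := hf.continuousOn.integrableOn_compact hK
  rwa [IntegrableOn, Measure.restrict_eq_self_of_ae_mem (mem_ae_iff.mpr hKc)] at integrableOn_K

theorem integrable_eval_of_integrable_pow {μ : Measure ℝ}
    (hμ : ∀ n : ℕ, Integrable (fun x => x ^ n) μ) (p : Polynomial ℝ) :
    Integrable (fun x => p.eval x) μ := by
  simp only [Polynomial.eval_eq_sum_range]
  exact integrable_finsetSum _ fun n _ => (hμ n).const_mul _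

theorem integral_sum_smul_apply_eq_zero {Ω α m n : Type*} [MeasurableSpace Ω] {μ : Measure Ω}
    {s : Finset α} {f : α → Ω → ℝ} (hf : ∀ k ∈ s, Integrable (f k) μ)
    (hf_zero : ∀ k ∈ s, ∫ ω, f k ω ∂μ = 0) (M : α → Matrix m n ℝ) (i : m) (j : n) :
    ∫ ω, (∑ k ∈ s, f k ω • M k) i j ∂μ = 0 := by
  simp only [Matrix.sum_apply, Matrix.smul_apply, smul_eq_mul]
  rw [integral_finsetSum s fun k hk => (hf k hk).mul_const _]
  exact Finset.sum_eq_zero fun k hk => by rw [integral_mul_const, hf_zero k hk, zero_mul]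

end Integration

theorem stmt15_general (μ : Measure ℝ) [IsProbabilityMeasure μ]
    (hμ : ∀ n : ℕ, Integrable (fun x => x ^ n) μ)
    (H : ℕ → Polynomial ℝ) (γ : ℕ → ℝ)
    (hH0 : H 0 = 1)
    (hγ : ∀ n : ℕ, 1 ≤ n → γ n = ∫ x, x * (H (n - 1)).eval x ∂μ)
    (hHrec : ∀ n : ℕ, 1 ≤ n → H n = Polynomial.X * H (n - 1) - Polynomial.C (γ n))
    {ι : Type*} [Fintype ι] [DecidableEq ι] (t : ℕ)
    (Φ : Matrix ι ι ℝ) (hΦ : Φ ^ t = 0)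
    (Cm : Matrix ι ι ℝ) (hCm : Cm = ∑ i ∈ Finset.range t, γ (i + 1) • Φ ^ i) :
    (∀ x : ℝ,
        IsUnit (1 - x • Φ) ∧
        (1 - x • Φ)⁻¹ * (x • (1 : Matrix ι ι ℝ) - Cm) =
          ∑ i ∈ Finset.range t, (H (i + 1)).eval x • Φ ^ i) ∧
    (∀ n : ℕ, 1 ≤ n → ∫ x, (H n).eval x ∂μ = 0) ∧
    (∀ i j : ι, ∫ x, ((1 - x • Φ)⁻¹ * (x • (1 : Matrix ι ι ℝ) - Cm)) i j ∂μ = 0) := by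
  have eval_rec (x : ℝ) (n : ℕ) : (H (n + 1)).eval x = x * (H n).eval x - γ (n + 1) := by
    simp [hHrec (n + 1) n.succ_pos]
  have resolvent_eq (x : ℝ) : (1 - x • Φ)⁻¹ * (x • (1 : Matrix ι ι ℝ) - Cm) =
      ∑ i ∈ Finset.range t, (H (i + 1)).eval x • Φ ^ i := by
    rw [hCm]
    exact inv_one_sub_smul_mul_eq_sum_smul_pow (h := fun n => (H n).eval x) (by simp [hH0])
      (eval_rec x) hΦ
  have mean_zero (n : ℕ) (hn : 1 ≤ n) : ∫ x, (H n).eval x ∂μ = 0 := by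
    have centered := integral_sub_average μ fun x => x * (H (n - 1)).eval x
    rw [average_eq_integral, ← hγ n hn] at centered
    simpa only [hHrec n hn, Polynomial.eval_sub, Polynomial.eval_mul, Polynomial.eval_X,
      Polynomial.eval_C] using centered
  refine ⟨fun x => ⟨isUnit_one_sub_smul_of_pow_eq_zero hΦ x, resolvent_eq x⟩, mean_zero, ?_⟩
  intro i j
  simp only [resolvent_eq]
  exact integral_sum_smul_apply_eq_zero (fun k _ => integrable_eval_of_integrable_pow hμ _)
    (fun k _ => mean_zero (k + 1) k.succ_pos) _ i j

theorem stmt15 (μ : Measure ℝ) [IsProbabilityMeasure μ]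
    (K : Set ℝ) (hK : IsCompact K) (hKc : μ Kᶜ = 0)
    (H : ℕ → Polynomial ℝ) (γ : ℕ → ℝ)
    (hH0 : H 0 = 1)
    (hγ : ∀ n : ℕ, 1 ≤ n → γ n = ∫ x, x * (H (n - 1)).eval x ∂μ)
    (hHrec : ∀ n : ℕ, 1 ≤ n → H n = Polynomial.X * H (n - 1) - Polynomial.C (γ n))
    (t : ℕ) (ht : 1 ≤ t)
    (Φ : Matrix (Fin t) (Fin t) ℝ)
    (hΦ : ∀ i j : Fin t, i ≤ j → Φ i j = 0)
    (Cm : Matrix (Fin t) (Fin t) ℝ)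
    (hCm : Cm = ∑ i ∈ Finset.range t, γ (i + 1) • Φ ^ i) :
    (∀ x : ℝ,
        IsUnit ((1 : Matrix (Fin t) (Fin t) ℝ) - x • Φ) ∧
        ((1 : Matrix (Fin t) (Fin t) ℝ) - x • Φ)⁻¹ *
            (x • (1 : Matrix (Fin t) (Fin t) ℝ) - Cm) =
          ∑ i ∈ Finset.range t, (H (i + 1)).eval x • Φ ^ i) ∧
    (∀ n : ℕ, 1 ≤ n → (∫ x, (H n).eval x ∂μ) = 0) ∧
    (∀ i j : Fin t,
        (∫ x, (((1 : Matrix (Fin t) (Fin t) ℝ) - x • Φ)⁻¹ *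
            (x • (1 : Matrix (Fin t) (Fin t) ℝ) - Cm)) i j ∂μ) = 0) := by
  have moments (n : ℕ) : Integrable (fun x => x ^ n) μ :=
    integrable_of_continuous_of_measure_compl_compact_eq_zero hK hKc (continuous_pow n)
  have nilpotent : Φ ^ t = 0 := by
    simpa using matrix_pow_card_eq_zero_of_strictlyLowerTriangular hΦ
  exact stmt15_general μ moments H γ hH0 hγ hHrec t Φ nilpotent Cm hCm
end

section
/- Let μ be a compactly supported Borel probability measure on ℝ with moments m_k := ∫ λ^k dμ(λ) (m_0 := 1). Fix t ≥ 1 and let Φ ∈ ℝ^{t×t} be strictly lower triangular. Then the matrix M := Σ_{i=1}^{t} m_{i−1}·Φ^{i−1} (with Φ^0 := I_t) is invertible, and C := M^{−1}·(Σ_{i=1}^{t} m_i·Φ^{i−1}) is the unique t×t real matrix satisfying ∫ (I_t − λ·Φ)^{−1}·(λ·I_t − C) dμ(λ) = 0 entrywise; moreover this C equals Σ_{i=1}^{t} γ_i·Φ^{i−1}, where (γ_i)_{i≥1} is defined from μ as in the context. -/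
/-!
For `Φ ^ t = 0` the resolvent is the truncated Neumann series
`(1 - λ Φ)⁻¹ = ∑_{i < t} λ ^ i Φ ^ i`, so the integral equation for `C` reads `M C = N` with
`N = ∑_{i < t} m_{i+1} Φ ^ i`. Since `m_0 = 1`, `M` is the identity plus a nilpotent, hence
invertible, and `M⁻¹ N` is the only solution. On the other hand, `H_{n+1} = λ H_n - γ_{n+1}` is
the coefficient recursion of
`(1 - λ Φ)⁻¹ (λ - ∑_{i < t} γ_{i+1} Φ ^ i) = ∑_{n < t} H_{n+1}(λ) Φ ^ n`,
and `γ_{n+1}` is chosen precisely so that `H_{n+1}` has mean zero. Therefore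
`∑_{i < t} γ_{i+1} Φ ^ i` is a solution as well, and the two coincide.
-/

open MeasureTheory

section NilpotentAlgebra

variable {k R : Type*} [CommRing k] [Ring R] [Algebra k R]

theorem isUnit_sum_range_smul_pow {A : R} {t : ℕ} (hA : A ^ t = 0) {a : ℕ → k}
    (ha : IsUnit (a 0)) : IsUnit (∑ i ∈ Finset.range t, a i • A ^ i) := by
  cases t with
  | zero =>
    have : Subsingleton R := subsingleton_of_zero_eq_one (by simpa using hA.symm)
    exact isUnit_of_subsingleton _
  | succ s =>
    have hconst : IsUnit (a 0 • A ^ 0) := by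
      simpa [Algebra.algebraMap_eq_smul_one] using ha.map (algebraMap k R)
    have hfactor : ∑ i ∈ Finset.range s, a (i + 1) • A ^ (i + 1)
        = A * ∑ i ∈ Finset.range s, a (i + 1) • A ^ i := by
      simp only [Finset.mul_sum, mul_smul_comm, pow_succ']
    have hcomm : Commute A (∑ i ∈ Finset.range s, a (i + 1) • A ^ i) :=
      Commute.sum_right _ _ _ fun i _ => ((Commute.refl A).pow_right i).smul_right _
    have hnil : IsNilpotent (∑ i ∈ Finset.range s, a (i + 1) • A ^ (i + 1)) :=
      hfactor ▸ hcomm.isNilpotent_mul_right ⟨_, hA⟩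
    rw [Finset.sum_range_succ']
    refine hnil.isUnit_add_right_of_commute hconst ?_
    rw [pow_zero]
    exact (Commute.one_right _).smul_right _

theorem one_sub_smul_mul_sum_range_smul_pow (A : R) {x : k} {h γ : ℕ → k} (h_zero : h 0 = 1)
    (h_succ : ∀ n, h (n + 1) = x * h n - γ (n + 1)) (t : ℕ) :
    (1 - x • A) * ∑ n ∈ Finset.range t, h (n + 1) • A ^ n
      = x • 1 - ∑ n ∈ Finset.range t, γ (n + 1) • A ^ n - (x * h t) • A ^ t := by
  induction t with
  | zero => simp [h_zero]
  | succ t ih =>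
    have hstep : (1 - x • A) * h (t + 1) • A ^ t
        = (x * h t) • A ^ t - γ (t + 1) • A ^ t - (x * h (t + 1)) • A ^ (t + 1) := by
      rw [sub_mul, one_mul, smul_mul_smul_comm, ← pow_succ', ← sub_smul, ← h_succ]
    rw [Finset.sum_range_succ, Finset.sum_range_succ, mul_add, ih, hstep]
    abel

end NilpotentAlgebra

section NilpotentMatrix

variable {n k : Type*} [Fintype n] [DecidableEq n] [CommRing k]

theorem pow_card_eq_zero_of_strictly_lower_triangular [LinearOrder n] {Φ : Matrix n n k}
    (hΦ : ∀ i j, i ≤ j → Φ i j = 0) : Φ ^ Fintype.card n = 0 := by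
  have hcharpoly : Φ.charpoly = Polynomial.X ^ Fintype.card n := by
    have hupper : Φ.transpose.IsUpperTriangular := fun i j hij => hΦ j i (le_of_lt hij)
    rw [← Φ.charpoly_transpose, Matrix.charpoly_of_isUpperTriangular _ hupper]
    simp [hΦ]
  simpa [hcharpoly] using Φ.aeval_self_charpoly

variable {Φ : Matrix n n k} {t : ℕ}

theorem inv_one_sub_smul_eq_sum_range (hΦ : Φ ^ t = 0) (x : k) :
    (1 - x • Φ)⁻¹ = ∑ i ∈ Finset.range t, x ^ i • Φ ^ i := by
  refine Matrix.inv_eq_right_inv ?_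
  simpa [smul_pow, hΦ] using mul_neg_geom_sum (x • Φ) t

theorem inv_one_sub_smul_mul_sub (hΦ : Φ ^ t = 0) (C : Matrix n n k) (x : k) :
    (1 - x • Φ)⁻¹ * (x • 1 - C)
      = ∑ i ∈ Finset.range t, x ^ (i + 1) • Φ ^ i
        - ∑ i ∈ Finset.range t, x ^ i • (Φ ^ i * C) := by
  simp only [inv_one_sub_smul_eq_sum_range hΦ, mul_sub, Finset.sum_mul, smul_mul_assoc,
    mul_smul_comm, mul_one, Finset.smul_sum, smul_smul, pow_succ']

theorem inv_one_sub_smul_mul_sub_sum_range (hΦ : Φ ^ t = 0) {x : k} {h γ : ℕ → k}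
    (h_zero : h 0 = 1) (h_succ : ∀ n, h (n + 1) = x * h n - γ (n + 1)) :
    (1 - x • Φ)⁻¹ * (x • 1 - ∑ i ∈ Finset.range t, γ (i + 1) • Φ ^ i)
      = ∑ i ∈ Finset.range t, h (i + 1) • Φ ^ i := by
  have hunit : IsUnit (1 - x • Φ) :=
    IsNilpotent.isUnit_one_sub ⟨t, by rw [smul_pow, hΦ, smul_zero]⟩
  have hprod := one_sub_smul_mul_sum_range_smul_pow Φ h_zero h_succ t
  rw [hΦ, smul_zero, sub_zero] at hprod
  rw [← hprod, Matrix.nonsing_inv_mul_cancel_left _ _ ((Matrix.isUnit_iff_isUnit_det _).1 hunit)]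

end NilpotentMatrix

section Integrability

theorem integrable_of_continuous_of_measure_compl_eq_zero {X E : Type*} [TopologicalSpace X]
    [T2Space X] [MeasurableSpace X] [OpensMeasurableSpace X] [NormedAddCommGroup E]
    [SecondCountableTopologyEither X E] {μ : Measure X} [IsFiniteMeasureOnCompacts μ] {K : Set X}
    (hK : IsCompact K) (hKc : μ Kᶜ = 0) {f : X → E} (hf : Continuous f) : Integrable f μ := by
  have hf_on : IntegrableOn f K μ := hf.continuousOn.integrableOn_compact hK
  rwa [IntegrableOn, Measure.restrict_eq_self_of_ae_mem (mem_ae_iff.2 hKc)] at hf_on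

theorem integrable_eval_of_natDegree_le {μ : Measure ℝ} {d : ℕ}
    (hμ : ∀ k ≤ d, Integrable (fun x => x ^ k) μ) {p : Polynomial ℝ} (hp : p.natDegree ≤ d) :
    Integrable (fun x => p.eval x) μ := by
  simp only [Polynomial.eval_eq_sum_range' (Nat.lt_succ_of_le hp)]
  exact integrable_finsetSum _ fun k hk => (hμ k (Finset.mem_range_succ_iff.1 hk)).const_mul _

variable {α ι m n 𝕜 : Type*} [MeasurableSpace α] {μ : Measure α} [RCLike 𝕜] {s : Finset ι}
  {f : ι → α → 𝕜}

theorem integrable_sum_smul_apply (hf : ∀ k ∈ s, Integrable (f k) μ) (A : ι → Matrix m n 𝕜)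
    (i : m) (j : n) : Integrable (fun x => (∑ k ∈ s, f k x • A k) i j) μ := by
  simp only [Matrix.sum_apply, Matrix.smul_apply, smul_eq_mul]
  exact integrable_finsetSum _ fun k hk => (hf k hk).mul_const _

theorem integral_sum_smul_apply (hf : ∀ k ∈ s, Integrable (f k) μ) (A : ι → Matrix m n 𝕜)
    (i : m) (j : n) :
    ∫ x, (∑ k ∈ s, f k x • A k) i j ∂μ = (∑ k ∈ s, (∫ x, f k x ∂μ) • A k) i j := by
  simp only [Matrix.sum_apply, Matrix.smul_apply, smul_eq_mul]
  rw [integral_finsetSum _ fun k hk => (hf k hk).mul_const _]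
  simp only [integral_mul_const]

end Integrability

theorem natDegree_le_of_eq_X_mul_sub_C {R : Type*} [Ring R] {H : ℕ → Polynomial R} {γ : ℕ → R}
    (H_zero : H 0 = 1)
    (H_succ : ∀ n, H (n + 1) = Polynomial.X * H n - Polynomial.C (γ (n + 1))) (n : ℕ) :
    (H n).natDegree ≤ n := by
  induction n with
  | zero => simp [H_zero]
  | succ n ih =>
    rw [H_succ, Polynomial.natDegree_sub_C, add_comm]
    exact Polynomial.natDegree_mul_le_of_le Polynomial.natDegree_X_le ih

theorem integral_eval_succ_eq_zero {μ : Measure ℝ} [IsProbabilityMeasure μ]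
    {H : ℕ → Polynomial ℝ} {γ : ℕ → ℝ} {n : ℕ}
    (hμ : ∀ k ≤ n + 1, Integrable (fun x => x ^ k) μ) (H_zero : H 0 = 1)
    (H_succ : ∀ n, H (n + 1) = Polynomial.X * H n - Polynomial.C (γ (n + 1)))
    (hγ : γ (n + 1) = ∫ x, x * (H n).eval x ∂μ) :
    ∫ x, (H (n + 1)).eval x ∂μ = 0 := by
  have hdeg : (Polynomial.X * H n).natDegree ≤ n + 1 := by
    rw [add_comm]
    exact Polynomial.natDegree_mul_le_of_le Polynomial.natDegree_X_le
      (natDegree_le_of_eq_X_mul_sub_C H_zero H_succ n)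
  have hint : Integrable (fun x => x * (H n).eval x) μ := by
    simpa using integrable_eval_of_natDegree_le hμ hdeg
  simp only [H_succ, Polynomial.eval_sub, Polynomial.eval_mul, Polynomial.eval_X,
    Polynomial.eval_C]
  rw [integral_sub hint (integrable_const _), ← hγ]
  simp

section ResolventEquation

variable {n : Type*} [Fintype n] [DecidableEq n] {Φ : Matrix n n ℝ} {t : ℕ} {μ : Measure ℝ}

theorem integral_inv_one_sub_smul_mul_sub_apply (hΦ : Φ ^ t = 0)
    (hμ : ∀ k ≤ t, Integrable (fun x => x ^ k) μ) (C : Matrix n n ℝ) (i j : n) :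
    ∫ x, ((1 - x • Φ)⁻¹ * (x • 1 - C)) i j ∂μ
      = (∑ k ∈ Finset.range t, (∫ x, x ^ (k + 1) ∂μ) • Φ ^ k
          - (∑ k ∈ Finset.range t, (∫ x, x ^ k ∂μ) • Φ ^ k) * C) i j := by
  have hpow : ∀ k ∈ Finset.range t, Integrable (fun x : ℝ => x ^ k) μ :=
    fun k hk => hμ k (Finset.mem_range.1 hk).le
  have hpow_succ : ∀ k ∈ Finset.range t, Integrable (fun x : ℝ => x ^ (k + 1)) μ :=
    fun k hk => hμ (k + 1) (Finset.mem_range.1 hk)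
  simp only [inv_one_sub_smul_mul_sub hΦ, Matrix.sub_apply]
  rw [integral_sub (integrable_sum_smul_apply hpow_succ _ i j)
      (integrable_sum_smul_apply hpow _ i j),
    integral_sum_smul_apply hpow_succ, integral_sum_smul_apply hpow, Finset.sum_mul]
  simp only [smul_mul_assoc]

theorem forall_integral_inv_one_sub_smul_mul_sub_eq_zero_iff (hΦ : Φ ^ t = 0)
    (hμ : ∀ k ≤ t, Integrable (fun x => x ^ k) μ) (C : Matrix n n ℝ) :
    (∀ i j, ∫ x, ((1 - x • Φ)⁻¹ * (x • 1 - C)) i j ∂μ = 0) ↔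
      (∑ k ∈ Finset.range t, (∫ x, x ^ k ∂μ) • Φ ^ k) * C
        = ∑ k ∈ Finset.range t, (∫ x, x ^ (k + 1) ∂μ) • Φ ^ k := by
  simp only [integral_inv_one_sub_smul_mul_sub_apply hΦ hμ]
  rw [eq_comm, ← sub_eq_zero, ← Matrix.ext_iff]
  rfl

theorem integral_inv_one_sub_smul_mul_sub_sum_range_eq_zero [IsProbabilityMeasure μ]
    (hΦ : Φ ^ t = 0) (hμ : ∀ k ≤ t, Integrable (fun x => x ^ k) μ) {H : ℕ → Polynomial ℝ}
    {γ : ℕ → ℝ} (H_zero : H 0 = 1)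
    (H_succ : ∀ n, H (n + 1) = Polynomial.X * H n - Polynomial.C (γ (n + 1)))
    (hγ : ∀ n, γ (n + 1) = ∫ x, x * (H n).eval x ∂μ) (i j : n) :
    ∫ x, ((1 - x • Φ)⁻¹ * (x • 1 - ∑ k ∈ Finset.range t, γ (k + 1) • Φ ^ k)) i j ∂μ = 0 := by
  have hresolvent (x : ℝ) :
      (1 - x • Φ)⁻¹ * (x • 1 - ∑ k ∈ Finset.range t, γ (k + 1) • Φ ^ k)
        = ∑ k ∈ Finset.range t, (H (k + 1)).eval x • Φ ^ k :=
    inv_one_sub_smul_mul_sub_sum_range hΦ (h := fun k => (H k).eval x) (by simp [H_zero])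
      (by simp [H_succ])
  have hintegrable : ∀ k ∈ Finset.range t, Integrable (fun x => (H (k + 1)).eval x) μ :=
    fun k hk => integrable_eval_of_natDegree_le hμ
      ((natDegree_le_of_eq_X_mul_sub_C H_zero H_succ _).trans (Finset.mem_range.1 hk))
  have hmean : ∀ k ∈ Finset.range t, ∫ x, (H (k + 1)).eval x ∂μ = 0 := fun k hk =>
    integral_eval_succ_eq_zero (fun l hl => hμ l (hl.trans (Finset.mem_range.1 hk))) H_zero
      H_succ (hγ k)
  simp only [hresolvent]
  rw [integral_sum_smul_apply hintegrable,
    Finset.sum_eq_zero fun k hk => by rw [hmean k hk, zero_smul], Matrix.zero_apply]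

end ResolventEquation

theorem stmt16_general {n : Type*} [Fintype n] [DecidableEq n] (μ : Measure ℝ)
    [IsProbabilityMeasure μ] (t : ℕ) (hμ : ∀ k ≤ t, Integrable (fun x => x ^ k) μ)
    (H : ℕ → Polynomial ℝ) (γ : ℕ → ℝ) (H_zero : H 0 = 1)
    (hγ : ∀ n, γ (n + 1) = ∫ x, x * (H n).eval x ∂μ)
    (H_succ : ∀ n, H (n + 1) = Polynomial.X * H n - Polynomial.C (γ (n + 1)))
    (Φ : Matrix n n ℝ) (hΦ : Φ ^ t = 0) (M Cm : Matrix n n ℝ)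
    (hM : M = ∑ i ∈ Finset.range t, (∫ x, x ^ i ∂μ) • Φ ^ i)
    (hCm : Cm = M⁻¹ * ∑ i ∈ Finset.range t, (∫ x, x ^ (i + 1) ∂μ) • Φ ^ i) :
    IsUnit M ∧
    (∀ i j, ∫ x, ((1 - x • Φ)⁻¹ * (x • 1 - Cm)) i j ∂μ = 0) ∧
    (∀ C' : Matrix n n ℝ,
      (∀ i j, ∫ x, ((1 - x • Φ)⁻¹ * (x • 1 - C')) i j ∂μ = 0) → C' = Cm) ∧
    Cm = ∑ i ∈ Finset.range t, γ (i + 1) • Φ ^ i := by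
  have hunit : IsUnit M := hM ▸ isUnit_sum_range_smul_pow hΦ (by simp)
  have hdet : IsUnit M.det := (Matrix.isUnit_iff_isUnit_det M).1 hunit
  have hsolution (C : Matrix n n ℝ) :
      (∀ i j, ∫ x, ((1 - x • Φ)⁻¹ * (x • 1 - C)) i j ∂μ = 0) ↔ C = Cm := by
    rw [forall_integral_inv_one_sub_smul_mul_sub_eq_zero_iff hΦ hμ, ← hM, hCm]
    constructor
    · intro hC
      rw [← hC, Matrix.nonsing_inv_mul_cancel_left _ _ hdet]
    · rintro rfl
      exact Matrix.mul_nonsing_inv_cancel_left _ _ hdet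
  exact ⟨hunit, (hsolution Cm).2 rfl, fun C' => (hsolution C').1, Eq.symm <| (hsolution _).1 <|
    integral_inv_one_sub_smul_mul_sub_sum_range_eq_zero hΦ hμ H_zero H_succ hγ⟩

theorem stmt16 (μ : Measure ℝ) [IsProbabilityMeasure μ]
    (K : Set ℝ) (hK : IsCompact K) (hKc : μ Kᶜ = 0)
    (H : ℕ → Polynomial ℝ) (γ : ℕ → ℝ)
    (hH0 : H 0 = 1)
    (hγ : ∀ n : ℕ, 1 ≤ n → γ n = ∫ x, x * (H (n - 1)).eval x ∂μ)
    (hHrec : ∀ n : ℕ, 1 ≤ n → H n = Polynomial.X * H (n - 1) - Polynomial.C (γ n))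
    (t : ℕ) (ht : 1 ≤ t)
    (Φ : Matrix (Fin t) (Fin t) ℝ)
    (hΦ : ∀ i j : Fin t, i ≤ j → Φ i j = 0)
    (M Cm : Matrix (Fin t) (Fin t) ℝ)
    (hM : M = ∑ i ∈ Finset.range t, (∫ x, x ^ i ∂μ) • Φ ^ i)
    (hCm : Cm = M⁻¹ * ∑ i ∈ Finset.range t, (∫ x, x ^ (i + 1) ∂μ) • Φ ^ i) :
    IsUnit M ∧
    (∀ i j : Fin t,
        (∫ x, (((1 : Matrix (Fin t) (Fin t) ℝ) - x • Φ)⁻¹ *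
            (x • (1 : Matrix (Fin t) (Fin t) ℝ) - Cm)) i j ∂μ) = 0) ∧
    (∀ C' : Matrix (Fin t) (Fin t) ℝ,
        (∀ i j : Fin t,
          (∫ x, (((1 : Matrix (Fin t) (Fin t) ℝ) - x • Φ)⁻¹ *
              (x • (1 : Matrix (Fin t) (Fin t) ℝ) - C')) i j ∂μ) = 0) →
        C' = Cm) ∧
    Cm = ∑ i ∈ Finset.range t, γ (i + 1) • Φ ^ i := by
  have hμ (k : ℕ) : Integrable (fun x => x ^ k) μ :=
    integrable_of_continuous_of_measure_compl_eq_zero hK hKc (continuous_pow k)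
  have hnil : Φ ^ t = 0 := by simpa using pow_card_eq_zero_of_strictly_lower_triangular hΦ
  exact stmt16_general μ t (fun k _ => hμ k) H γ hH0 (fun n => hγ (n + 1) n.succ_pos)
    (fun n => hHrec (n + 1) n.succ_pos) Φ hnil M Cm hM hCm
end

section
/- Let μ be a compactly supported Borel probability measure on ℝ and let (H_n)_{n≥0}, (γ_n)_{n≥1} be defined from μ as in the context. Fix integers N ≥ 1 and t ≥ 1. Let W be an arbitrary real N×N matrix, let (d_{s,i})_{1≤i≤s≤t−1} be real numbers, and let Φ ∈ ℝ^{t×t} be the strictly lower triangular matrix with entries Φ_{s,i} = d_{s−1,i} for i < s. Set C := Σ_{i=1}^{t} γ_i·Φ^{i−1} (with Φ^0 := I_t), with entries c_{s,i} := C_{s,i}. Let u_1 = ū_1 ∈ ℝ^N, and for 1 ≤ s ≤ t define r_s := W·u_s − Σ_{i=1}^{s} c_{s,i}·ū_i, and for 1 ≤ s ≤ t−1 let u_{s+1} ∈ ℝ^N be arbitrary and set ū_{s+1} := u_{s+1} − Σ_{i=1}^{s} d_{s,i}·r_i. Then for every 1 ≤ s ≤ t, r_s = Σ_{i=1}^{s}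 G_{s,i}(W)·ū_i, where G_{s,i}(λ) denotes the (s,i) entry of the matrix Σ_{j=1}^{t} H_j(λ)·Φ^{j−1} and G_{s,i}(W) its evaluation at the matrix W. -/
open MeasureTheory

/-!
Let `φ` be nilpotent and put `G = ∑ H_{j+1} φ^j`, `C = ∑ γ_{j+1} φ^j`. The recursion for `H` makes
`(1 - x φ) G` telescope to `x - C`. On the other hand, eliminating `u` from `r = x u - C ū` and
`ū = u - φ r` gives `(1 - x φ) r = (x - C) ū`. As `1 - x φ` is invertible, `r = G ū`.
Here the scalars are `ℝ[X]`, acting on `ℝ^N` by the substitution `X ↦ W`; `x` is `X`, and `φ` is `Φ`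
acting on `t`-tuples of vectors.
-/

section Resolvent

variable {S E V : Type*} [CommRing S] [Ring E] [Algebra S E] {x : S} {H γ : ℕ → S}

theorem one_sub_smul_mul_sum_smul_pow_s17 (hH : ∀ n, H (n + 1) = x * H n - γ (n + 1)) (φ : E) (t : ℕ) :
    (1 - x • φ) * ∑ j ∈ Finset.range t, H (j + 1) • φ ^ j =
      (x * H 0) • 1 - ∑ j ∈ Finset.range t, γ (j + 1) • φ ^ j - (x * H t) • φ ^ t := by
  have summand (j : ℕ) : (1 - x • φ) * H (j + 1) • φ ^ j =
      ((x * H j) • φ ^ j - (x * H (j + 1)) • φ ^ (j + 1)) - γ (j + 1) • φ ^ j := by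
    rw [sub_mul, one_mul, smul_mul_smul_comm, ← pow_succ', sub_right_comm, ← sub_smul, ← hH]
  rw [Finset.mul_sum, Finset.sum_congr rfl fun j _ ↦ summand j, Finset.sum_sub_distrib,
    Finset.sum_range_sub', pow_zero, sub_right_comm]

variable [AddCommGroup V] [Module S V] [Module E V] [IsScalarTower S E V]

theorem eq_sum_smul_pow_smul (hH0 : H 0 = 1) (hH : ∀ n, H (n + 1) = x * H n - γ (n + 1))
    {φ : E} {t : ℕ} (hφ : φ ^ t = 0) {u r v : V}
    (hr : r = x • u - (∑ j ∈ Finset.range t, γ (j + 1) • φ ^ j) • v) (hv : v = u - φ • r) :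
    r = (∑ j ∈ Finset.range t, H (j + 1) • φ ^ j) • v := by
  set C := ∑ j ∈ Finset.range t, γ (j + 1) • φ ^ j
  set G := ∑ j ∈ Finset.range t, H (j + 1) • φ ^ j
  have resolvent : (1 - x • φ) * G = x • 1 - C := by
    rw [one_sub_smul_mul_sum_smul_pow_s17 hH, hH0, hφ, mul_one, smul_zero, sub_zero]
  have isUnit : IsUnit (1 - x • φ) :=
    IsNilpotent.isUnit_one_sub ⟨t, by rw [smul_pow, hφ, smul_zero]⟩
  have eliminated : (1 - x • φ) • r = (x • (1 : E) - C) • v := by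
    have hu : u = v + φ • r := by rw [hv, sub_add_cancel]
    rw [sub_smul, sub_smul, one_smul, smul_assoc, smul_assoc, one_smul, sub_eq_iff_eq_add]
    conv_lhs => rw [hr, hu, smul_add]
    abel
  rw [← isUnit.smul_left_cancel, eliminated, ← mul_smul, resolvent]

end Resolvent

section Triangular

open scoped Matrix Matrix.Module

variable {ι R M : Type*}

/-- Strict lower triangularity of a square matrix: all entries on and above the diagonal vanish. -/
def IsStrictlyLowerTriangular [LE ι] [Zero R] (Φ : Matrix ι ι R) : Prop :=
  ∀ i j, i ≤ j → Φ i j = 0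

namespace IsStrictlyLowerTriangular

theorem map {S F : Type*} [LE ι] [Zero R] [Zero S] [FunLike F R S]
    [ZeroHomClass F R S] {Φ : Matrix ι ι R} (hΦ : IsStrictlyLowerTriangular Φ) (f : F) :
    IsStrictlyLowerTriangular (Φ.map f) :=
  fun i j hij ↦ by rw [Matrix.map_apply, hΦ i j hij, map_zero]

theorem isLowerTriangular [Preorder ι] [Zero R] {Φ : Matrix ι ι R}
    (hΦ : IsStrictlyLowerTriangular Φ) : Φ.IsLowerTriangular :=
  fun i j hij ↦ hΦ i j (le_of_lt hij)

variable [LinearOrder ι] [Fintype ι]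

theorem pow_card_eq_zero [CommRing R] {Φ : Matrix ι ι R}
    (hΦ : IsStrictlyLowerTriangular Φ) : Φ ^ Fintype.card ι = 0 := by
  have charpoly_eq : Φ.charpoly = .X ^ Fintype.card ι := by
    have upper : Φᵀ.IsUpperTriangular := hΦ.isLowerTriangular.transpose
    rw [← Matrix.charpoly_transpose, Matrix.charpoly_of_isUpperTriangular _ upper]
    simp [hΦ _ _ le_rfl]
  simpa [charpoly_eq] using Matrix.aeval_self_charpoly Φ

theorem sum_filter_lt_smul [Ring R] [AddCommGroup M] [Module R M] {Φ : Matrix ι ι R}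
    (hΦ : IsStrictlyLowerTriangular Φ) (v : ι → M) (s : ι) :
    ∑ i with i < s, Φ s i • v i = (Φ • v) s := by
  refine Finset.sum_filter_of_ne fun i _ hne ↦ not_le.mp fun hsi ↦ hne ?_
  rw [hΦ s i hsi, zero_smul]

end IsStrictlyLowerTriangular

variable [LinearOrder ι] [Fintype ι]

theorem isLowerTriangular_sum_smul_pow [Semiring R] {Φ : Matrix ι ι R}
    (hΦ : Φ.IsLowerTriangular) (J : Finset ℕ) (a : ℕ → R) :
    (∑ j ∈ J, a j • Φ ^ j).IsLowerTriangular := by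
  intro i k hik
  simp [Matrix.sum_apply, fun j ↦ hΦ.pow j hik]

theorem sum_filter_le_smul [Ring R] [AddCommGroup M] [Module R M] {L : Matrix ι ι R}
    (hL : L.IsLowerTriangular) (v : ι → M) (s : ι) :
    ∑ i with i ≤ s, L s i • v i = (L • v) s := by
  refine Finset.sum_filter_of_ne fun i _ hne ↦ not_lt.mp fun hsi ↦ hne ?_
  rw [hL hsi, zero_smul]

end Triangular

theorem map_sum_smul_pow {n R S : Type*} [Fintype n] [DecidableEq n] [Semiring R] [Semiring S]
    (f : R →+* S) (J : Finset ℕ) (a : ℕ → R) (Φ : Matrix n n R) :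
    (∑ j ∈ J, a j • Φ ^ j).map f = ∑ j ∈ J, f (a j) • Φ.map f ^ j := by
  ext s i
  simp [Matrix.sum_apply, ← Matrix.map_pow]

section Iteration

open scoped Polynomial Matrix.Module

variable {ι M : Type*} [Fintype ι] [LinearOrder ι] [AddCommGroup M]

theorem eq_sum_filter_le_sum_smul_pow_smul {S : Type*} [CommRing S] [Module S M] {x : S}
    {H γ : ℕ → S} (hH0 : H 0 = 1) (hH : ∀ n, H (n + 1) = x * H n - γ (n + 1))
    {Φ : Matrix ι ι S} (hΦ : IsStrictlyLowerTriangular Φ) {t : ℕ} (ht : Fintype.card ι ≤ t)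
    {u r v : ι → M}
    (hr : ∀ s, r s = x • u s -
      ∑ i with i ≤ s, (∑ j ∈ Finset.range t, γ (j + 1) • Φ ^ j) s i • v i)
    (hv : ∀ s, v s = u s - ∑ i with i < s, Φ s i • r i) (s : ι) :
    r s = ∑ i with i ≤ s, (∑ j ∈ Finset.range t, H (j + 1) • Φ ^ j) s i • v i := by
  have lower (a : ℕ → S) := isLowerTriangular_sum_smul_pow hΦ.isLowerTriangular (.range t) a
  simp only [sum_filter_le_smul (lower _), hΦ.sum_filter_lt_smul] at hr hv ⊢
  exact congr_fun (eq_sum_smul_pow_smul hH0 hH (pow_eq_zero_of_le ht hΦ.pow_card_eq_zero)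
    (funext hr) (funext hv)) s

theorem stmt17_general {R A : Type*} [CommRing R] [Ring A] [Algebra R A] [Module R M] [Module A M]
    [IsScalarTower R A M] {H : ℕ → R[X]} {γ : ℕ → R} (hH0 : H 0 = 1)
    (hH : ∀ n, H (n + 1) = .X * H n - .C (γ (n + 1))) (W : A)
    {Φ : Matrix ι ι R} (hΦ : IsStrictlyLowerTriangular Φ) {t : ℕ} (ht : Fintype.card ι ≤ t)
    {u r ubar : ι → M}
    (hr : ∀ s, r s = W • u s -
      ∑ i with i ≤ s, (∑ j ∈ Finset.range t, γ (j + 1) • Φ ^ j) s i • ubar i)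
    (hubar : ∀ s, ubar s = u s - ∑ i with i < s, Φ s i • r i) (s : ι) :
    r s = ∑ i with i ≤ s, Polynomial.aeval W
      ((∑ j ∈ Finset.range t, H (j + 1) • (Φ ^ j).map Polynomial.C) s i) • ubar i := by
  let _ : Module R[X] M := Module.compHom M (Polynomial.aeval W).toRingHom
  have smul_def (p : R[X]) (m : M) : p • m = Polynomial.aeval W p • m := rfl
  have C_smul (a : R) (m : M) : Polynomial.C a • m = a • m := by
    rw [smul_def, Polynomial.aeval_C, algebraMap_smul]
  have X_smul (m : M) : (.X : R[X]) • m = W • m := by rw [smul_def, Polynomial.aeval_X]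
  simp only [Matrix.map_pow, ← smul_def]
  refine eq_sum_filter_le_sum_smul_pow_smul (x := .X) (H := H) (γ := fun n ↦ .C (γ n)) (u := u)
    hH0 hH (hΦ.map Polynomial.C) ht (fun s ↦ ?_) (fun s ↦ ?_) s
  · simpa only [← map_sum_smul_pow, Matrix.map_apply, C_smul, X_smul] using hr s
  · simpa only [Matrix.map_apply, C_smul] using hubar s

end Iteration

theorem stmt17 (μ : Measure ℝ) [IsProbabilityMeasure μ]
    (K : Set ℝ) (hK : IsCompact K) (hKc : μ Kᶜ = 0)
    (H : ℕ → Polynomial ℝ) (γ : ℕ → ℝ)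
    (hH0 : H 0 = 1)
    (hγ : ∀ n : ℕ, 1 ≤ n → γ n = ∫ x, x * (H (n - 1)).eval x ∂μ)
    (hHrec : ∀ n : ℕ, 1 ≤ n → H n = Polynomial.X * H (n - 1) - Polynomial.C (γ n))
    (N t : ℕ) (hN : 1 ≤ N) (ht : 1 ≤ t)
    (W : Matrix (Fin N) (Fin N) ℝ)
    (Φ : Matrix (Fin t) (Fin t) ℝ)
    (hΦ : ∀ i j : Fin t, i ≤ j → Φ i j = 0)
    (Cm : Matrix (Fin t) (Fin t) ℝ)
    (hCm : Cm = ∑ i ∈ Finset.range t, γ (i + 1) • Φ ^ i)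
    (u r ubar : Fin t → Fin N → ℝ)
    (hr : ∀ s : Fin t,
      r s = W.mulVec (u s) - ∑ i ∈ Finset.univ.filter (fun i => i ≤ s), Cm s i • ubar i)
    (hubar : ∀ s : Fin t,
      ubar s = u s - ∑ i ∈ Finset.univ.filter (fun i => i < s), Φ s i • r i) :
    ∀ s : Fin t,
      r s = ∑ i ∈ Finset.univ.filter (fun i => i ≤ s),
        (Polynomial.aeval W
          ((∑ j ∈ Finset.range t, H (j + 1) • (Φ ^ j).map Polynomial.C) s i)).mulVec (ubar i) := by
  subst hCm
  -- `W.mulVec` is definitionally the action of `W` on `Fin N → ℝ` in the scope `Matrix.Module`.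
  open scoped Matrix.Module in
  exact stmt17_general hH0 (fun n ↦ hHrec (n + 1) n.succ_pos) W hΦ (Fintype.card_fin t).le hr hubar
end

section
/- Let μ be a compactly supported Borel probability measure on ℝ, let t ≥ 1, let f_1,…,f_t : ℝ → ℝ be continuous functions, and let Φ ∈ ℝ^{t×t} be strictly lower triangular. For a lower triangular matrix E ∈ ℝ^{t×t} and λ ∈ ℝ, write F(λ) := diag(f_1(λ),…,f_t(λ)); then I_t − F(λ)·Φ + E·Φ is lower triangular with unit diagonal, hence invertible, and one may define J_E(λ) := (I_t − F(λ)·Φ + E·Φ)^{−1}·(F(λ) − E). Then there exists exactly one lower triangular matrix E ∈ ℝ^{t×t} such that ∫ J_E(λ) dμ(λ) = 0 (the integral taken entrywise). -/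
open MeasureTheory

open Set Function
open scoped NNReal ENNReal

/-!
Put `G = F(λ) - E`, so that `J_E = (1 - G Φ)⁻¹ G` satisfies `J_E = G + G Φ J_E`. Filter the matrices
by letting level `k` consist of those supported on the entries with `i - j ≥ k`. Levels add under
products, and `Φ` has level `1`. If `E - E'` has level `k`, the resolvent identity shows that
`J_E - J_E'` has level `k`, and therefore `(E + J_E) - (E' + J_E') = G Φ J_E - G' Φ J_E'` has level
`k + 1`. Averaging over `λ`, the map `E ↦ E + ∫ J_E dμ` gains one level at each application, so its
`t`-th iterate is constant on the lower triangular matrices, and it has exactly one fixed point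
there.
-/

section FixedPoint

theorem existsUnique_isFixedPt_of_iterate_constOn {X : Type*} {S : Set X} (hS : S.Nonempty)
    {T : X → X} (hT : MapsTo T S S) {n : ℕ} (hn : ∀ x ∈ S, ∀ y ∈ S, T^[n] x = T^[n] y) :
    ∃! x, x ∈ S ∧ IsFixedPt T x := by
  obtain ⟨a, ha⟩ := hS
  refine ⟨T^[n] a, ⟨hT.iterate n ha, ?_⟩, fun x ⟨hx, hfix⟩ => ?_⟩
  · rw [IsFixedPt, ← iterate_succ_apply' T n a, iterate_succ_apply]
    exact hn _ (hT ha) _ ha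
  · rw [← hn x hx a ha, (hfix.iterate n).eq]

theorem existsUnique_isFixedPt_of_filtration {A : Type*} [AddGroup A] (V : ℕ → AddSubgroup A)
    {n : ℕ} (hn : V n = ⊥) {T : A → A} (hT : MapsTo T (V 0) (V 0))
    (hgain : ∀ x ∈ V 0, ∀ y ∈ V 0, ∀ k, x - y ∈ V k → T x - T y ∈ V (k + 1)) :
    ∃! x, x ∈ V 0 ∧ IsFixedPt T x := by
  have iterate_sub_mem : ∀ x ∈ V 0, ∀ y ∈ V 0, ∀ k, T^[k] x - T^[k] y ∈ V k := by
    intro x hx y hy k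
    induction k with
    | zero => exact (V 0).sub_mem hx hy
    | succ k ih =>
      rw [iterate_succ_apply', iterate_succ_apply']
      exact hgain _ (hT.iterate k hx) _ (hT.iterate k hy) k ih
  refine existsUnique_isFixedPt_of_iterate_constOn ⟨0, (V 0).zero_mem⟩ hT (n := n) ?_
  intro x hx y hy
  have hmem := iterate_sub_mem x hx y hy n
  rwa [hn, AddSubgroup.mem_bot, sub_eq_zero] at hmem

end FixedPoint

section LowerBand

variable {R : Type*} {n : ℕ}

/-- The matrices supported on the entries `(i, j)` with `i - j ≥ k`: the lower triangular matrices
for `k = 0`, the strictly lower triangular ones for `k = 1`. The condition is written without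
subtraction. -/
def lowerBand (R : Type*) [AddGroup R] (n k : ℕ) : AddSubgroup (Matrix (Fin n) (Fin n) R) where
  carrier := {M | ∀ i j : Fin n, (i : ℕ) < j + k → M i j = 0}
  zero_mem' _ _ _ := rfl
  add_mem' hM hN i j hij := by rw [Matrix.add_apply, hM i j hij, hN i j hij, add_zero]
  neg_mem' hM i j hij := by rw [Matrix.neg_apply, hM i j hij, neg_zero]

theorem mem_lowerBand [AddGroup R] {k : ℕ} {M : Matrix (Fin n) (Fin n) R} :
    M ∈ lowerBand R n k ↔ ∀ i j : Fin n, (i : ℕ) < j + k → M i j = 0 :=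
  Iff.rfl

theorem mem_lowerBand_zero [AddGroup R] {M : Matrix (Fin n) (Fin n) R} :
    M ∈ lowerBand R n 0 ↔ ∀ i j, i < j → M i j = 0 :=
  Iff.rfl

theorem mem_lowerBand_one [AddGroup R] {M : Matrix (Fin n) (Fin n) R} :
    M ∈ lowerBand R n 1 ↔ ∀ i j, i ≤ j → M i j = 0 := by
  simp only [mem_lowerBand, Order.lt_add_one_iff, Fin.val_fin_le]

theorem lowerBand_antitone [AddGroup R] : Antitone (lowerBand R n) :=
  fun _ _ hkl _ hM i j hij => hM i j (hij.trans_le (Nat.add_le_add_left hkl j))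

theorem lowerBand_self_eq_bot [AddGroup R] : lowerBand R n n = ⊥ :=
  (AddSubgroup.eq_bot_iff_forall _).2 fun _ hM =>
    Matrix.ext fun i j => hM i j (i.isLt.trans_le (Nat.le_add_left n j))

theorem diagonal_mem_lowerBand [AddGroup R] (d : Fin n → R) :
    Matrix.diagonal d ∈ lowerBand R n 0 :=
  mem_lowerBand_zero.2 fun _ _ hij => Matrix.diagonal_apply_ne d hij.ne

theorem mul_mem_lowerBand [Ring R] {k l : ℕ} {M N : Matrix (Fin n) (Fin n) R}
    (hM : M ∈ lowerBand R n k) (hN : N ∈ lowerBand R n l) : M * N ∈ lowerBand R n (k + l) := by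
  intro i j hij
  rw [Matrix.mul_apply]
  refine Finset.sum_eq_zero fun m _ => ?_
  rcases lt_or_ge (i : ℕ) (m + k) with him | him
  · rw [hM i m him, zero_mul]
  · rw [hN m j (by omega), mul_zero]

theorem one_mem_lowerBand [Ring R] : (1 : Matrix (Fin n) (Fin n) R) ∈ lowerBand R n 0 :=
  diagonal_mem_lowerBand 1

theorem pow_mem_lowerBand [Ring R] {N : Matrix (Fin n) (Fin n) R} (hN : N ∈ lowerBand R n 1)
    (k : ℕ) : N ^ k ∈ lowerBand R n k := by
  induction k with
  | zero => exact one_mem_lowerBand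
  | succ k ih => exact pow_succ N k ▸ mul_mem_lowerBand ih hN

variable [CommRing R] {N : Matrix (Fin n) (Fin n) R}

theorem one_sub_mul_geom_sum_of_mem_lowerBand (hN : N ∈ lowerBand R n 1) :
    (1 - N) * ∑ k ∈ Finset.range n, N ^ k = 1 := by
  have hpow : N ^ n = 0 := by
    simpa only [lowerBand_self_eq_bot, AddSubgroup.mem_bot] using pow_mem_lowerBand hN n
  rw [mul_neg_geom_sum, hpow, sub_zero]

theorem inv_one_sub_of_mem_lowerBand (hN : N ∈ lowerBand R n 1) :
    (1 - N)⁻¹ = ∑ k ∈ Finset.range n, N ^ k :=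
  Matrix.inv_eq_right_inv (one_sub_mul_geom_sum_of_mem_lowerBand hN)

theorem isUnit_det_one_sub_of_mem_lowerBand (hN : N ∈ lowerBand R n 1) :
    IsUnit (1 - N).det :=
  Matrix.isUnit_det_of_right_inverse (one_sub_mul_geom_sum_of_mem_lowerBand hN)

theorem inv_one_sub_mem_lowerBand (hN : N ∈ lowerBand R n 1) : (1 - N)⁻¹ ∈ lowerBand R n 0 := by
  rw [inv_one_sub_of_mem_lowerBand hN]
  exact sum_mem fun k _ => lowerBand_antitone k.zero_le (pow_mem_lowerBand hN k)

end LowerBand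

section Feedback

variable {R : Type*} [CommRing R] {n k : ℕ} {Φ G G' : Matrix (Fin n) (Fin n) R}

/-- The solution `J` of the feedback equation `J = G + G Φ J`, with the junk value `0` where
`1 - G Φ` is singular. The matrix `J_E(λ)` of the theorem is `feedback Φ (F(λ) - E)`. -/
noncomputable def feedback (Φ G : Matrix (Fin n) (Fin n) R) : Matrix (Fin n) (Fin n) R :=
  (1 - G * Φ)⁻¹ * G

theorem feedback_mem_lowerBand (hΦ : Φ ∈ lowerBand R n 1) (hG : G ∈ lowerBand R n 0) :
    feedback Φ G ∈ lowerBand R n 0 :=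
  mul_mem_lowerBand (inv_one_sub_mem_lowerBand (mul_mem_lowerBand hG hΦ)) hG

theorem feedback_eq_geom_sum_mul (hΦ : Φ ∈ lowerBand R n 1) (hG : G ∈ lowerBand R n 0) :
    feedback Φ G = (∑ k ∈ Finset.range n, (G * Φ) ^ k) * G := by
  rw [feedback, inv_one_sub_of_mem_lowerBand (mul_mem_lowerBand hG hΦ)]

theorem one_sub_mul_feedback (hΦ : Φ ∈ lowerBand R n 1) (hG : G ∈ lowerBand R n 0) :
    (1 - G * Φ) * feedback Φ G = G :=
  Matrix.mul_nonsing_inv_cancel_left _ _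
    (isUnit_det_one_sub_of_mem_lowerBand (mul_mem_lowerBand hG hΦ))

theorem feedback_sub_self (hΦ : Φ ∈ lowerBand R n 1) (hG : G ∈ lowerBand R n 0) :
    feedback Φ G - G = G * Φ * feedback Φ G := by
  have heq := one_sub_mul_feedback hΦ hG
  rw [sub_mul, one_mul, sub_eq_iff_eq_add] at heq
  exact sub_eq_iff_eq_add'.2 heq

theorem feedback_sub_feedback (hΦ : Φ ∈ lowerBand R n 1) (hG : G ∈ lowerBand R n 0)
    (hG' : G' ∈ lowerBand R n 0) :
    feedback Φ G - feedback Φ G' = (1 - G * Φ)⁻¹ * ((G - G') * (1 + Φ * feedback Φ G')) := by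
  have hunit := isUnit_det_one_sub_of_mem_lowerBand (mul_mem_lowerBand hG hΦ)
  have hcleared : (1 - G * Φ) * (feedback Φ G - feedback Φ G') =
      (G - G') * (1 + Φ * feedback Φ G') := by
    calc (1 - G * Φ) * (feedback Φ G - feedback Φ G')
        = G - (feedback Φ G' - G * Φ * feedback Φ G') := by
          rw [mul_sub, one_sub_mul_feedback hΦ hG, sub_mul, one_mul]
      _ = G - (G' + G' * Φ * feedback Φ G' - G * Φ * feedback Φ G') := by
          rw [← feedback_sub_self hΦ hG', add_sub_cancel]
      _ = (G - G') * (1 + Φ * feedback Φ G') := by noncomm_ring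
  rw [← hcleared, Matrix.nonsing_inv_mul_cancel_left _ _ hunit]

theorem feedback_sub_feedback_mem_lowerBand (hΦ : Φ ∈ lowerBand R n 1) (hG : G ∈ lowerBand R n 0)
    (hG' : G' ∈ lowerBand R n 0) (hsub : G - G' ∈ lowerBand R n k) :
    feedback Φ G - feedback Φ G' ∈ lowerBand R n k := by
  have hfactor : 1 + Φ * feedback Φ G' ∈ lowerBand R n 0 :=
    add_mem one_mem_lowerBand <| lowerBand_antitone zero_le_one <|
      mul_mem_lowerBand hΦ (feedback_mem_lowerBand hΦ hG')
  rw [feedback_sub_feedback hΦ hG hG', ← zero_add k]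
  exact mul_mem_lowerBand (inv_one_sub_mem_lowerBand (mul_mem_lowerBand hG hΦ))
    (mul_mem_lowerBand hsub hfactor)

theorem feedback_sub_self_sub_mem_lowerBand (hΦ : Φ ∈ lowerBand R n 1) (hG : G ∈ lowerBand R n 0)
    (hG' : G' ∈ lowerBand R n 0) (hsub : G - G' ∈ lowerBand R n k) :
    feedback Φ G - G - (feedback Φ G' - G') ∈ lowerBand R n (k + 1) := by
  have hsplit : feedback Φ G - G - (feedback Φ G' - G') =
      (G - G') * Φ * feedback Φ G + G' * Φ * (feedback Φ G - feedback Φ G') := by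
    rw [feedback_sub_self hΦ hG, feedback_sub_self hΦ hG']
    noncomm_ring
  rw [hsplit]
  refine add_mem ?_ ?_
  · rw [← add_zero (k + 1)]
    exact mul_mem_lowerBand (mul_mem_lowerBand hsub hΦ) (feedback_mem_lowerBand hΦ hG)
  · rw [add_comm k 1, ← zero_add 1]
    exact mul_mem_lowerBand (mul_mem_lowerBand hG' hΦ)
      (feedback_sub_feedback_mem_lowerBand hΦ hG hG' hsub)

end Feedback

section Moments

variable {Ω 𝕜 : Type*} [MeasurableSpace Ω] [RCLike 𝕜] {n : ℕ}

/-- The algebra of functions that lie in `L^p` for every finite `p`. Unlike a single `L^p`, it is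
closed under products, so it contains every polynomial in its elements. -/
def momentAlgebra (𝕜 : Type*) [RCLike 𝕜] (μ : Measure Ω) [IsFiniteMeasure μ] :
    Subalgebra 𝕜 (Ω → 𝕜) where
  carrier := {X | ∀ p : ℝ≥0, MemLp X p μ}
  add_mem' hX hY p := (hX p).add (hY p)
  mul_mem' hX hY p := by
    have holder : ENNReal.HolderTriple (2 * p : ℝ≥0) (2 * p : ℝ≥0) p := ⟨by
      rw [ENNReal.coe_mul, ENNReal.coe_ofNat, ENNReal.mul_inv (by simp) (by simp), ← add_mul,
        ENNReal.inv_two_add_inv_two, one_mul]⟩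
    exact (hY (2 * p)).mul (hX (2 * p))
  algebraMap_mem' c _ := memLp_const c

section FiniteMeasure

variable {μ : Measure Ω} [IsFiniteMeasure μ]

theorem integrable_of_mem_momentAlgebra {X : Ω → 𝕜} (hX : X ∈ momentAlgebra 𝕜 μ) :
    Integrable X μ :=
  memLp_one_iff_integrable.1 (by simpa using hX 1)

theorem const_mem_momentAlgebra (c : 𝕜) : (fun _ => c) ∈ momentAlgebra 𝕜 μ :=
  (momentAlgebra 𝕜 μ).algebraMap_mem c

theorem matrix_mul_mem_momentAlgebra {A B : Ω → Matrix (Fin n) (Fin n) 𝕜}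
    (hA : ∀ i j, (fun ω => A ω i j) ∈ momentAlgebra 𝕜 μ)
    (hB : ∀ i j, (fun ω => B ω i j) ∈ momentAlgebra 𝕜 μ) (i j : Fin n) :
    (fun ω => (A ω * B ω) i j) ∈ momentAlgebra 𝕜 μ := by
  have hentry : (fun ω => (A ω * B ω) i j) = ∑ m, (fun ω => A ω i m) * fun ω => B ω m j := by
    ext ω
    simp only [Matrix.mul_apply, Finset.sum_apply, Pi.mul_apply]
  rw [hentry]
  exact sum_mem fun m _ => mul_mem (hA i m) (hB m j)

theorem matrix_pow_mem_momentAlgebra {A : Ω → Matrix (Fin n) (Fin n) 𝕜}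
    (hA : ∀ i j, (fun ω => A ω i j) ∈ momentAlgebra 𝕜 μ) (k : ℕ) (i j : Fin n) :
    (fun ω => (A ω ^ k) i j) ∈ momentAlgebra 𝕜 μ := by
  induction k generalizing i j with
  | zero => simpa only [pow_zero] using const_mem_momentAlgebra _
  | succ k ih => simpa only [pow_succ] using matrix_mul_mem_momentAlgebra ih hA i j

theorem feedback_mem_momentAlgebra {Φ : Matrix (Fin n) (Fin n) 𝕜} (hΦ : Φ ∈ lowerBand 𝕜 n 1)
    {G : Ω → Matrix (Fin n) (Fin n) 𝕜} (hG : ∀ ω, G ω ∈ lowerBand 𝕜 n 0)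
    (hmoments : ∀ i j, (fun ω => G ω i j) ∈ momentAlgebra 𝕜 μ) (i j : Fin n) :
    (fun ω => feedback Φ (G ω) i j) ∈ momentAlgebra 𝕜 μ := by
  simp only [fun ω => feedback_eq_geom_sum_mul hΦ (hG ω)]
  refine matrix_mul_mem_momentAlgebra (fun i j => ?_) hmoments i j
  have hGΦ := matrix_mul_mem_momentAlgebra hmoments fun i j => const_mem_momentAlgebra (Φ i j)
  have hentry : (fun ω => (∑ k ∈ Finset.range n, (G ω * Φ) ^ k) i j) =
      ∑ k ∈ Finset.range n, fun ω => ((G ω * Φ) ^ k) i j := by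
    ext ω
    simp only [Matrix.sum_apply, Finset.sum_apply]
  rw [hentry]
  exact sum_mem fun k _ => matrix_pow_mem_momentAlgebra hGΦ k i j

end FiniteMeasure

theorem memLp_of_continuous_of_isCompact {X E : Type*} [TopologicalSpace X] [MeasurableSpace X]
    [OpensMeasurableSpace X] [NormedAddCommGroup E] [SecondCountableTopologyEither X E]
    {μ : Measure X} [IsFiniteMeasure μ] {K : Set X} (hK : IsCompact K) (hKc : μ Kᶜ = 0)
    {f : X → E} (hf : Continuous f) (p : ℝ≥0∞) : MemLp f p μ := by
  obtain ⟨C, hC⟩ := hK.exists_bound_of_continuousOn hf.continuousOn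
  have hmemK : ∀ᵐ x ∂μ, x ∈ K := hKc
  exact MemLp.of_bound hf.aestronglyMeasurable C (hmemK.mono hC)

end Moments

section MeanFeedback

variable {Ω 𝕜 : Type*} [MeasurableSpace Ω] [RCLike 𝕜] {n k : ℕ}

/-- The entrywise integral `∫ J_E dμ` of the feedback matrices `J_E = feedback Φ (F - E)`. -/
noncomputable def meanFeedback (μ : Measure Ω) (F : Ω → Matrix (Fin n) (Fin n) 𝕜)
    (Φ E : Matrix (Fin n) (Fin n) 𝕜) : Matrix (Fin n) (Fin n) 𝕜 :=
  Matrix.of fun i j => ∫ ω, feedback Φ (F ω - E) i j ∂μ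

variable {μ : Measure Ω} {F : Ω → Matrix (Fin n) (Fin n) 𝕜} {Φ E E' : Matrix (Fin n) (Fin n) 𝕜}

theorem meanFeedback_mem_lowerBand (hF : ∀ ω, F ω ∈ lowerBand 𝕜 n 0) (hΦ : Φ ∈ lowerBand 𝕜 n 1)
    (hE : E ∈ lowerBand 𝕜 n 0) : meanFeedback μ F Φ E ∈ lowerBand 𝕜 n 0 := fun i j hij =>
  integral_eq_zero_of_ae <| .of_forall fun ω =>
    feedback_mem_lowerBand hΦ (sub_mem (hF ω) hE) i j hij

theorem integrable_feedback_sub [IsFiniteMeasure μ] (hF : ∀ ω, F ω ∈ lowerBand 𝕜 n 0)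
    (hmoments : ∀ i j, (fun ω => F ω i j) ∈ momentAlgebra 𝕜 μ) (hΦ : Φ ∈ lowerBand 𝕜 n 1)
    (hE : E ∈ lowerBand 𝕜 n 0) (i j : Fin n) :
    Integrable (fun ω => feedback Φ (F ω - E) i j) μ :=
  integrable_of_mem_momentAlgebra <| feedback_mem_momentAlgebra hΦ (fun ω => sub_mem (hF ω) hE)
    (fun i j => sub_mem (hmoments i j) (const_mem_momentAlgebra (E i j))) i j

variable [IsProbabilityMeasure μ]

theorem add_meanFeedback_apply {i j : Fin n}
    (hint : Integrable (fun ω => feedback Φ (F ω - E) i j) μ) :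
    (E + meanFeedback μ F Φ E) i j = ∫ ω, (E i j + feedback Φ (F ω - E) i j) ∂μ := by
  rw [integral_add (integrable_const _) hint, integral_const, probReal_univ, one_smul]
  rfl

theorem add_meanFeedback_sub_mem_lowerBand (hF : ∀ ω, F ω ∈ lowerBand 𝕜 n 0)
    (hmoments : ∀ i j, (fun ω => F ω i j) ∈ momentAlgebra 𝕜 μ) (hΦ : Φ ∈ lowerBand 𝕜 n 1)
    (hE : E ∈ lowerBand 𝕜 n 0) (hE' : E' ∈ lowerBand 𝕜 n 0) (hsub : E - E' ∈ lowerBand 𝕜 n k) :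
    E + meanFeedback μ F Φ E - (E' + meanFeedback μ F Φ E') ∈ lowerBand 𝕜 n (k + 1) := by
  intro i j hij
  have hint := integrable_feedback_sub hF hmoments hΦ hE i j
  have hint' := integrable_feedback_sub hF hmoments hΦ hE' i j
  rw [Matrix.sub_apply, add_meanFeedback_apply hint, add_meanFeedback_apply hint',
    ← integral_sub (integrable_const_add_iff.2 hint) (integrable_const_add_iff.2 hint')]
  refine integral_eq_zero_of_ae <| .of_forall fun ω => ?_
  have hshift : F ω - E - (F ω - E') ∈ lowerBand 𝕜 n k := by
    rw [sub_sub_sub_cancel_left, ← neg_sub]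
    exact neg_mem hsub
  have hgain := feedback_sub_self_sub_mem_lowerBand hΦ (sub_mem (hF ω) hE) (sub_mem (hF ω) hE')
    hshift i j hij
  simp only [Matrix.sub_apply, Pi.zero_apply] at hgain ⊢
  linear_combination hgain

theorem existsUnique_meanFeedback_eq_zero (hF : ∀ ω, F ω ∈ lowerBand 𝕜 n 0)
    (hmoments : ∀ i j, (fun ω => F ω i j) ∈ momentAlgebra 𝕜 μ) (hΦ : Φ ∈ lowerBand 𝕜 n 1) :
    ∃! E, E ∈ lowerBand 𝕜 n 0 ∧ meanFeedback μ F Φ E = 0 := by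
  simpa only [IsFixedPt, add_eq_left] using
    existsUnique_isFixedPt_of_filtration (lowerBand 𝕜 n) lowerBand_self_eq_bot
      (T := fun E => E + meanFeedback μ F Φ E)
      (fun E hE => add_mem hE (meanFeedback_mem_lowerBand hF hΦ hE))
      (fun E hE E' hE' k hsub => add_meanFeedback_sub_mem_lowerBand hF hmoments hΦ hE hE' hsub)

end MeanFeedback

theorem stmt19_general {Ω 𝕜 : Type*} [MeasurableSpace Ω] [RCLike 𝕜] (μ : Measure Ω)
    [IsProbabilityMeasure μ] {t : ℕ} (F : Ω → Matrix (Fin t) (Fin t) 𝕜)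
    (hF : ∀ ω i j, i < j → F ω i j = 0)
    (hmoments : ∀ i j, ∀ p : ℝ≥0, MemLp (fun ω => F ω i j) p μ)
    (Φ : Matrix (Fin t) (Fin t) 𝕜) (hΦ : ∀ i j, i ≤ j → Φ i j = 0) :
    ∃! E : Matrix (Fin t) (Fin t) 𝕜,
      (∀ i j, i < j → E i j = 0) ∧
      ∀ i j, ∫ ω, ((1 - F ω * Φ + E * Φ)⁻¹ * (F ω - E)) i j ∂μ = 0 := by
  have hfeedback : ∀ E ω, (1 - F ω * Φ + E * Φ)⁻¹ * (F ω - E) = feedback Φ (F ω - E) :=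
    fun E ω => by rw [feedback, sub_mul, sub_sub_eq_add_sub, add_sub_right_comm]
  simpa only [hfeedback, mem_lowerBand_zero, ← Matrix.ext_iff, meanFeedback, Matrix.of_apply,
    Matrix.zero_apply] using
    existsUnique_meanFeedback_eq_zero (fun ω => mem_lowerBand_zero.2 (hF ω)) hmoments
      (mem_lowerBand_one.2 hΦ)

theorem stmt19 (μ : Measure ℝ) [IsProbabilityMeasure μ]
    (K : Set ℝ) (hK : IsCompact K) (hKc : μ Kᶜ = 0)
    (t : ℕ) (ht : 1 ≤ t)
    (f : Fin t → ℝ → ℝ) (hf : ∀ i : Fin t, Continuous (f i))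
    (Φ : Matrix (Fin t) (Fin t) ℝ)
    (hΦ : ∀ i j : Fin t, i ≤ j → Φ i j = 0) :
    ∃! E : Matrix (Fin t) (Fin t) ℝ,
      (∀ i j : Fin t, i < j → E i j = 0) ∧
      ∀ i j : Fin t,
        (∫ x, (((1 : Matrix (Fin t) (Fin t) ℝ) -
              (Matrix.diagonal fun k => f k x) * Φ + E * Φ)⁻¹ *
            ((Matrix.diagonal fun k => f k x) - E)) i j ∂μ) = 0 :=
  stmt19_general μ _ (fun x => diagonal_mem_lowerBand fun k => f k x)
    (fun i j p => memLp_of_continuous_of_isCompact hK hKc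
      ((continuous_pi hf).matrix_diagonal.matrix_elem i j) p) Φ hΦ
end
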